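/- arXiv:1907.05801 — 2 statements merged into one kernel-verified Lean document; each statement's English description precedes it below -/
import Mathlib

section
/- Fix ℏ>0, m>0, t∈ℝ. Let (q,p)∈ℝ² and σ,σ̆∈ℂ with Re σ>0, Re σ̆>0 and Re(conj(σ)·σ̆)=1. Then the free Schrödinger evolution of the coherent state ψ^ℏ(σ,σ̆,q,p;·), defined as the inverse Fourier transform of k ↦ e^{−iℏtk²/(2m)}·ψ̂^ℏ(σ,σ̆,q,p;k), equals e^{(i/ℏ)A_t}·ψ^ℏ(σ_t, σ̆, q_t, p; ·) pointwise, where A_t := p²t/(2m), σ_t := σ + iσ̆t/(2m), and q_t := q + pt/m. -/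
open MeasureTheory Complex Filter

noncomputable section

/-- Heaviside step function: `1` for positive arguments, `0` otherwise. -/
def heav (x : ℝ) : ℝ := if 0 < x then 1 else 0

/-- Gaussian coherent state `ψ^ℏ(σ,σ̆,q,p;x)`. -/
def coh (ℏ : ℝ) (σ σ' : ℂ) (q p x : ℝ) : ℂ :=
  ((2 * Real.pi * ℏ : ℝ) : ℂ) ^ (-(1/4 : ℂ)) * σ ^ (-(1/2 : ℂ)) *
    Complex.exp (-(σ' * ((x : ℂ) - (q : ℂ)) ^ 2) / (4 * (ℏ : ℂ) * σ) +
      Complex.I * (p : ℂ) * ((x : ℂ) - (q : ℂ)) / (ℏ : ℂ))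

/-- Fourier transform `ψ̂(k) = (2π)^{-1/2} ∫ e^{-ikx} ψ(x) dx`. -/
def ft (ψ : ℝ → ℂ) (k : ℝ) : ℂ :=
  (((Real.sqrt (2 * Real.pi))⁻¹ : ℝ) : ℂ) *
    ∫ x : ℝ, Complex.exp (-(Complex.I) * (k : ℂ) * (x : ℂ)) * ψ x

/-- Reflection coefficients `R_±(k) = -(1 ± iℏ²|k|/(mα))⁻¹`; `s = ±1`. -/
def Rpm (ℏ m α s k : ℝ) : ℂ :=
  -(1 + (s : ℂ) * Complex.I * (ℏ : ℂ) ^ 2 * ((|k| : ℝ) : ℂ) / ((m : ℂ) * (α : ℂ)))⁻¹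

/-- Generalized eigenfunctions `φ_k⁺(x)`. -/
def phiP (ℏ m α k x : ℝ) : ℂ :=
  (((Real.sqrt (2 * Real.pi))⁻¹ : ℝ) : ℂ) *
    (Complex.exp (Complex.I * (k : ℂ) * (x : ℂ)) +
      Rpm ℏ m α 1 k * Complex.exp (-(Complex.I) * ((|k| : ℝ) : ℂ) * ((|x| : ℝ) : ℂ)))

/-- Bound state `φ_α` of the delta interaction (for `α < 0`). -/
def phiB (ℏ m α x : ℝ) : ℂ :=
  ((Real.sqrt (m * |α|) / ℏ : ℝ) : ℂ) * Complex.exp (((-(m * |α| * |x|) / ℏ ^ 2 : ℝ) : ℂ))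

/-- Quantum evolution `e^{-(it/ℏ)H_α} ψ` via the eigenfunction expansion. -/
def qEvol (ℏ m α t : ℝ) (ψ : ℝ → ℂ) (x : ℝ) : ℂ :=
  (∫ k : ℝ, Complex.exp (-(Complex.I) * (ℏ : ℂ) * (t : ℂ) * (k : ℂ) ^ 2 / (2 * (m : ℂ))) *
      phiP ℏ m α k x * (∫ y : ℝ, (starRingEnd ℂ) (phiP ℏ m α k y) * ψ y)) +
    ((heav (-α) : ℝ) : ℂ) *
      Complex.exp (-(Complex.I) * (t : ℂ) / (ℏ : ℂ) * ((-(m * α ^ 2) / (2 * ℏ ^ 2) : ℝ) : ℂ)) *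
      phiB ℏ m α x * (∫ y : ℝ, phiB ℏ m α y * ψ y)

/-- Classical perturbed evolution `e^{itL_β}` acting on functions of `(q,p)`. -/
def cEvol (m β t : ℝ) (f : ℝ → ℝ → ℂ) (q p : ℝ) : ℂ :=
  f (q + p * t / m) p -
    ((heav (-(t * q * p)) * heav (|p * t| / m - |q|) : ℝ) : ℂ) /
      (1 - (Real.sign t : ℂ) * 2 * Complex.I * ((|p| : ℝ) : ℂ) / ((m : ℂ) * (β : ℂ))) *
      (f (q + p * t / m) p + f (-(q + p * t / m)) (-p))

end

/-! Up to a scalar, the Fourier transform of a coherent state is the coherent state in the momentum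
`ℏk` with `(σ, σ̆, q, p)` replaced by `(σ̆ / 2, 2σ, p, -q)`. In momentum space free evolution is
multiplication by a Gaussian, which only shifts `σ` and `q` and contributes a phase. Applying the
duality twice returns the original coherent state, reflected, so the same formula also inverts the
transform. -/

lemma ofReal_mul_cpow {r : ℝ} (hr : 0 < r) (z c : ℂ) :
    ((r : ℂ) * z) ^ c = (r : ℂ) ^ c * z ^ c := by
  rcases eq_or_ne z 0 with rfl | hz
  · rcases eq_or_ne c 0 with rfl | hc
    · simp only [cpow_zero, mul_one]
    · simp only [mul_zero, zero_cpow hc]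
  · have hr₀ : (r : ℂ) ≠ 0 := ofReal_ne_zero.mpr hr.ne'
    rw [cpow_def_of_ne_zero (mul_ne_zero hr₀ hz), cpow_def_of_ne_zero hr₀, cpow_def_of_ne_zero hz,
      log_ofReal_mul hr hz, ofReal_log hr.le, add_mul, Complex.exp_add]

lemma ofReal_cpow_one_half {r : ℝ} (hr : 0 ≤ r) : (r : ℂ) ^ (1 / 2 : ℂ) = (√r : ℝ) := by
  rw [Real.sqrt_eq_rpow, ofReal_cpow hr]
  norm_num

lemma re_div_pos_iff {z w : ℂ} : 0 < (z / w).re ↔ 0 < ((starRingEnd ℂ) z * w).re := by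
  rcases eq_or_ne w 0 with rfl | hw
  · simp only [div_zero, mul_zero]
  have hre : (z / w).re = ((starRingEnd ℂ) z * w).re / normSq w := by
    simp only [div_re, mul_re, conj_re, conj_im]
    ring
  rw [hre, div_pos_iff_of_pos_right (normSq_pos.mpr hw)]

lemma re_inv_pos {z : ℂ} (hz : 0 < z.re) : 0 < (z⁻¹).re := by
  rw [inv_re]
  exact div_pos hz (normSq_pos.mpr (ne_zero_of_re_pos hz))

/-- Compatibility of the width parameters `σ, σ̆` of a coherent state: the Gaussian decays, and the
principal logarithm of `σ / σ̆` does not wrap around the branch cut, so that principal square roots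
respect this quotient. Free evolution may turn `Re σ` negative, which is why this condition, rather
than positivity of both real parts, is imposed on the widths. -/
structure CompatibleWidths (σ σ' : ℂ) : Prop where
  ratio_re_pos : 0 < (σ / σ').re
  log_ratio : log (σ / σ') = log σ - log σ'

namespace CompatibleWidths

variable {σ σ' : ℂ}

lemma left_ne_zero (h : CompatibleWidths σ σ') : σ ≠ 0 :=
  (div_ne_zero_iff.mp (ne_zero_of_re_pos h.ratio_re_pos)).1

lemma right_ne_zero (h : CompatibleWidths σ σ') : σ' ≠ 0 :=
  (div_ne_zero_iff.mp (ne_zero_of_re_pos h.ratio_re_pos)).2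

lemma symm (h : CompatibleWidths σ σ') : CompatibleWidths σ' σ where
  ratio_re_pos := inv_div σ σ' ▸ re_inv_pos h.ratio_re_pos
  log_ratio := by
    have harg : (σ / σ').arg ≠ Real.pi := slitPlane_arg_ne_pi (Or.inl h.ratio_re_pos)
    rw [← inv_div σ σ', log_inv _ harg, h.log_ratio, neg_sub]

lemma ofReal_mul_left (h : CompatibleWidths σ σ') {r : ℝ} (hr : 0 < r) :
    CompatibleWidths (r * σ) σ' where
  ratio_re_pos := by
    rw [mul_div_assoc, re_ofReal_mul]
    exact mul_pos hr h.ratio_re_pos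
  log_ratio := by
    rw [mul_div_assoc, log_ofReal_mul hr (ne_zero_of_re_pos h.ratio_re_pos),
      log_ofReal_mul hr h.left_ne_zero, h.log_ratio, add_sub_assoc]

lemma cpow_neg_mul_ratio_cpow (h : CompatibleWidths σ σ') (c : ℂ) :
    σ ^ (-c) * (σ / σ') ^ c = σ' ^ (-c) := by
  rw [cpow_def_of_ne_zero h.left_ne_zero, cpow_def_of_ne_zero h.right_ne_zero,
    cpow_def_of_ne_zero (ne_zero_of_re_pos h.ratio_re_pos), h.log_ratio, ← Complex.exp_add]
  congr 1
  ring

lemma half_right (h : CompatibleWidths σ σ') : CompatibleWidths σ (σ' / 2) := by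
  have hscaled := (h.symm.ofReal_mul_left one_half_pos).symm
  rwa [ofReal_div, ofReal_one, ofReal_ofNat, one_div_mul_eq_div] at hscaled

lemma dual (h : CompatibleWidths σ σ') : CompatibleWidths (σ' / 2) (2 * σ) := by
  exact_mod_cast (h.half_right.ofReal_mul_left two_pos).symm

lemma of_ratio_re_pos (hratio : 0 < (σ / σ').re) (hσ' : 0 < σ'.re) : CompatibleWidths σ σ' := by
  refine ⟨hratio, eq_sub_of_add_eq ?_⟩
  have hσ'₀ : σ' ≠ 0 := ne_zero_of_re_pos hσ'
  have hratio_arg := abs_lt.mp (abs_arg_lt_pi_div_two_iff.mpr (Or.inl hratio))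
  have hσ'_arg := abs_lt.mp (abs_arg_lt_pi_div_two_iff.mpr (Or.inl hσ'))
  rw [← log_mul (ne_zero_of_re_pos hratio) hσ'₀
    ⟨by linarith [hratio_arg.1, hσ'_arg.1], by linarith [hratio_arg.2, hσ'_arg.2]⟩,
    div_mul_cancel₀ σ hσ'₀]

lemma gaussian_decay (h : CompatibleWidths σ σ') {ℏ : ℝ} (hℏ : 0 < ℏ) :
    0 < (σ' / (4 * ℏ * σ)).re := by
  have hscale : σ' / (4 * ℏ * σ) = ((4 * ℏ)⁻¹ : ℝ) * (σ' / σ) := by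
    push_cast
    field_simp
  rw [hscale, re_ofReal_mul]
  exact mul_pos (by positivity) h.symm.ratio_re_pos

lemma fourier_amplitude (h : CompatibleWidths σ σ') {ℏ : ℝ} (hℏ : 0 < ℏ) :
    ((√(2 * Real.pi))⁻¹ : ℝ) *
        (σ ^ (-(1 / 2 : ℂ)) * (Real.pi / (σ' / (4 * ℏ * σ))) ^ (1 / 2 : ℂ)) =
      (√ℏ : ℝ) * (σ' / 2) ^ (-(1 / 2 : ℂ)) := by
  have hquot : (Real.pi / (σ' / (4 * ℏ * σ)) : ℂ) = (2 * Real.pi * ℏ : ℝ) * (σ / (σ' / 2)) := by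
    push_cast
    field_simp [h.right_ne_zero]
    ring
  rw [hquot, ofReal_mul_cpow (by positivity), ofReal_cpow_one_half (by positivity),
    mul_left_comm (σ ^ _), h.half_right.cpow_neg_mul_ratio_cpow, ← mul_assoc, ← ofReal_mul,
    Real.sqrt_mul (x := 2 * Real.pi) (by positivity), inv_mul_cancel_left₀ (by positivity)]

end CompatibleWidths

lemma integral_cexp_mul_wavePacket {b : ℂ} (hb : 0 < b.re) (k q c : ℂ) :
    ∫ y : ℝ, cexp (-I * k * y) * cexp (-b * (y - q) ^ 2 + I * c * (y - q)) =
      (Real.pi / b) ^ (1 / 2 : ℂ) * cexp (-(I * k * q) - (k - c) ^ 2 / (4 * b)) := by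
  have hb₀ : b ≠ 0 := ne_zero_of_re_pos hb
  have hexpand : ∀ y : ℝ, cexp (-I * k * y) * cexp (-b * (y - q) ^ 2 + I * c * (y - q)) =
      cexp (-b * (y : ℂ) ^ 2 + (2 * b * q + I * c - I * k) * y + (-b * q ^ 2 - I * c * q)) := by
    intro y
    rw [← Complex.exp_add]
    congr 1
    ring
  have hcomplete_square :
      -b * q ^ 2 - I * c * q - (2 * b * q + I * c - I * k) ^ 2 / (4 * -b) =
        -(I * k * q) - (k - c) ^ 2 / (4 * b) := by
    field_simp
    linear_combination (c - k) ^ 2 * I_sq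
  simp_rw [hexpand]
  rw [integral_cexp_quadratic (by rwa [neg_re, neg_lt_zero]), neg_neg, hcomplete_square]

lemma ft_comp_mul_left (ψ : ℝ → ℂ) {a : ℝ} (ha : a ≠ 0) (k : ℝ) :
    ft (fun x => ψ (a * x)) k = (|a⁻¹| : ℝ) * ft ψ (k / a) := by
  have hsubst := Measure.integral_comp_mul_left
    (fun u : ℝ => cexp (-I * ((k / a : ℝ) : ℂ) * u) * ψ u) a
  have hphase : ∀ x : ℝ, -I * ((k / a : ℝ) : ℂ) * ((a * x : ℝ) : ℂ) = -I * k * x := by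
    intro x
    have ha₀ : (a : ℂ) ≠ 0 := ofReal_ne_zero.mpr ha
    push_cast
    field_simp
  simp only [hphase, real_smul] at hsubst
  simp only [ft, hsubst]
  ring

lemma ft_const_mul (c : ℂ) (ψ : ℝ → ℂ) (k : ℝ) : ft (fun x => c * ψ x) k = c * ft ψ k := by
  simp only [ft, mul_left_comm _ c, integral_const_mul]

lemma inverse_ft_eq_ft_neg (g : ℝ → ℂ) (x : ℝ) :
    ((√(2 * Real.pi))⁻¹ : ℝ) * ∫ k : ℝ, cexp (I * k * x) * g k = ft g (-x) := by
  simp only [ft, ofReal_neg, neg_mul_neg, mul_right_comm I]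

lemma coh_neg (ℏ : ℝ) (σ σ' : ℂ) (q p x : ℝ) :
    coh ℏ σ σ' (-q) (-p) (-x) = coh ℏ σ σ' q p x := by
  unfold coh
  push_cast
  ring_nf

lemma coh_eq_wavePacket (ℏ : ℝ) (σ σ' : ℂ) (q p x : ℝ) :
    coh ℏ σ σ' q p x = ((2 * Real.pi * ℏ : ℝ) : ℂ) ^ (-(1 / 4 : ℂ)) * σ ^ (-(1 / 2 : ℂ)) *
      cexp (-(σ' / (4 * ℏ * σ)) * (x - q) ^ 2 + I * (p / ℏ) * (x - q)) := by
  rw [coh]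
  congr 2
  ring

section

variable {ℏ : ℝ} {σ σ' : ℂ}

lemma ft_coh (hℏ : 0 < ℏ) (h : CompatibleWidths σ σ') (q p k : ℝ) :
    ft (coh ℏ σ σ' q p) k =
      (√ℏ : ℝ) * cexp (-(I * p * q / ℏ)) * coh ℏ (σ' / 2) (2 * σ) p (-q) (ℏ * k) := by
  have hexponent :
      cexp (-(I * k * q) - (k - p / ℏ) ^ 2 / (4 * (σ' / (4 * ℏ * σ)))) =
        cexp (-(I * p * q / ℏ)) *
          cexp (-(2 * σ / (4 * ℏ * (σ' / 2))) * ((ℏ * k : ℝ) - p) ^ 2 +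
            I * ((-q : ℝ) / ℏ) * ((ℏ * k : ℝ) - p)) := by
    have hℏ₀ : (ℏ : ℂ) ≠ 0 := ofReal_ne_zero.mpr hℏ.ne'
    rw [← Complex.exp_add]
    congr 1
    push_cast
    field_simp [h.left_ne_zero, h.right_ne_zero]
    ring
  simp only [ft, coh_eq_wavePacket, mul_left_comm (cexp (-I * k * _)), integral_const_mul,
    integral_cexp_mul_wavePacket (h.gaussian_decay hℏ), hexponent]
  linear_combination ((2 * Real.pi * ℏ : ℝ) : ℂ) ^ (-(1 / 4 : ℂ)) * cexp (-(I * p * q / ℏ)) *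
    cexp (-(2 * σ / (4 * ℏ * (σ' / 2))) * ((ℏ * k : ℝ) - p) ^ 2 +
      I * ((-q : ℝ) / ℏ) * ((ℏ * k : ℝ) - p)) * h.fourier_amplitude hℏ

lemma inverse_ft_coh (hℏ : 0 < ℏ) (h : CompatibleWidths σ σ') (q p x : ℝ) :
    ((√(2 * Real.pi))⁻¹ : ℝ) * ∫ k : ℝ, cexp (I * k * x) * ft (coh ℏ σ σ' q p) k =
      coh ℏ σ σ' q p x := by
  have hamplitude : ((√ℏ : ℝ) : ℂ) * (((ℏ⁻¹ : ℝ) : ℂ) * ((√ℏ : ℝ) : ℂ)) = 1 := by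
    rw [mul_left_comm, ← ofReal_mul, Real.mul_self_sqrt hℏ.le, ← ofReal_mul,
      inv_mul_cancel₀ hℏ.ne', ofReal_one]
  have hphase : cexp (-(I * p * q / ℏ)) * cexp (-(I * (-q : ℝ) * p / ℏ)) = 1 := by
    rw [← Complex.exp_add, ← Complex.exp_zero]
    congr 1
    push_cast
    ring
  calc ((√(2 * Real.pi))⁻¹ : ℝ) * ∫ k : ℝ, cexp (I * k * x) * ft (coh ℏ σ σ' q p) k
      = ft (ft (coh ℏ σ σ' q p)) (-x) := inverse_ft_eq_ft_neg _ x
    _ = (√ℏ : ℝ) * cexp (-(I * p * q / ℏ)) *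
          ((ℏ⁻¹ : ℝ) * ft (coh ℏ (σ' / 2) (2 * σ) p (-q)) (-x / ℏ)) := by
        rw [funext (ft_coh hℏ h q p), ft_const_mul, ft_comp_mul_left _ hℏ.ne',
          abs_of_pos (inv_pos.mpr hℏ)]
    _ = (√ℏ : ℝ) * cexp (-(I * p * q / ℏ)) *
          ((ℏ⁻¹ : ℝ) * ((√ℏ : ℝ) * cexp (-(I * (-q : ℝ) * p / ℏ)) * coh ℏ σ σ' q p x)) := by
        rw [ft_coh hℏ h.dual, mul_div_cancel_left₀ σ two_ne_zero, mul_div_cancel₀ σ' two_ne_zero,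
          mul_div_cancel₀ (-x) hℏ.ne', coh_neg]
    _ = coh ℏ σ σ' q p x := by
        linear_combination coh ℏ σ σ' q p x * hphase + coh ℏ σ σ' q p x *
          cexp (-(I * p * q / ℏ)) * cexp (-(I * (-q : ℝ) * p / ℏ)) * hamplitude

-- Expanding `k²` around `p / ℏ`, the quadratic term changes the width, the linear term the centre,
-- and the constant term gives the phase.
lemma freePropagator_mul_coh_dual {m : ℝ} (hℏ : ℏ ≠ 0) (hm : m ≠ 0) (hσ' : σ' ≠ 0) (t q p k : ℝ) :
    cexp (-I * ℏ * t * k ^ 2 / (2 * m)) * coh ℏ (σ' / 2) (2 * σ) p (-q) (ℏ * k) =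
      cexp (-(I / ℏ * (p ^ 2 * t / (2 * m) : ℝ))) *
        coh ℏ (σ' / 2) (2 * (σ + I * σ' * t / (2 * m))) p (-(q + p * t / m)) (ℏ * k) := by
  have hℏ₀ : (ℏ : ℂ) ≠ 0 := ofReal_ne_zero.mpr hℏ
  have hm₀ : (m : ℂ) ≠ 0 := ofReal_ne_zero.mpr hm
  rw [coh, coh, mul_left_comm, mul_left_comm (cexp _), ← Complex.exp_add, ← Complex.exp_add]
  congr 2
  push_cast
  field_simp
  ring

lemma freePropagator_mul_ft_coh {m t : ℝ} (hℏ : 0 < ℏ) (hm : m ≠ 0) (h : CompatibleWidths σ σ')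
    (ht : CompatibleWidths (σ + I * σ' * t / (2 * m)) σ') (q p k : ℝ) :
    cexp (-I * ℏ * t * k ^ 2 / (2 * m)) * ft (coh ℏ σ σ' q p) k =
      cexp (I / ℏ * (p ^ 2 * t / (2 * m) : ℝ)) *
        ft (coh ℏ (σ + I * σ' * t / (2 * m)) σ' (q + p * t / m) p) k := by
  have hphase : cexp (-(I * p * q / ℏ)) * cexp (-(I / ℏ * (p ^ 2 * t / (2 * m) : ℝ))) =
      cexp (I / ℏ * (p ^ 2 * t / (2 * m) : ℝ)) *
        cexp (-(I * p * (q + p * t / m : ℝ) / ℏ)) := by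
    rw [← Complex.exp_add, ← Complex.exp_add]
    congr 1
    push_cast
    ring
  rw [ft_coh hℏ h, ft_coh hℏ ht, mul_left_comm,
    freePropagator_mul_coh_dual hℏ.ne' hm h.right_ne_zero]
  linear_combination (√ℏ : ℝ) * coh ℏ (σ' / 2) (2 * (σ + I * σ' * t / (2 * m))) p
    (-(q + p * t / m)) (ℏ * k) * hphase

end

theorem statement12_general (ℏ m t : ℝ) (hℏ : 0 < ℏ) (hm : m ≠ 0) (q p : ℝ) (σ σ' : ℂ)
    (hσ' : 0 < σ'.re) (hdecay : 0 < ((starRingEnd ℂ) σ * σ').re) :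
    ∀ x : ℝ,
      (((Real.sqrt (2 * Real.pi))⁻¹ : ℝ) : ℂ) *
          (∫ k : ℝ, Complex.exp (Complex.I * (k : ℂ) * (x : ℂ)) *
            (Complex.exp (-(Complex.I) * (ℏ : ℂ) * (t : ℂ) * (k : ℂ) ^ 2 / (2 * (m : ℂ))) *
              ft (fun y => coh ℏ σ σ' q p y) k)) =
        Complex.exp (Complex.I / (ℏ : ℂ) * ((p ^ 2 * t / (2 * m) : ℝ) : ℂ)) *
          coh ℏ (σ + Complex.I * σ' * (t : ℂ) / (2 * (m : ℂ))) σ' (q + p * t / m) p x := by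
  intro x
  have hσ'₀ : σ' ≠ 0 := ne_zero_of_re_pos hσ'
  have hratio : 0 < (σ / σ').re := re_div_pos_iff.mpr hdecay
  have hratio_t : (σ + I * σ' * t / (2 * m)) / σ' = σ / σ' + I * (t / (2 * m) : ℝ) := by
    push_cast
    field_simp
  have hratio_t_pos : 0 < ((σ + I * σ' * t / (2 * m)) / σ').re := by
    rwa [hratio_t, add_re, re_mul_ofReal, I_re, zero_mul, add_zero]
  have h := CompatibleWidths.of_ratio_re_pos hratio hσ'
  have ht := CompatibleWidths.of_ratio_re_pos hratio_t_pos hσ'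
  simp only [freePropagator_mul_ft_coh hℏ hm h ht, mul_left_comm (cexp (I * _ * _)),
    integral_const_mul, mul_left_comm (((√(2 * Real.pi))⁻¹ : ℝ) : ℂ), inverse_ft_coh hℏ ht]

/-- the free Schrödinger evolution of a Gaussian coherent state is again a
Gaussian coherent state, up to the classical phase `e^{iA_t/ℏ}`. -/
theorem statement12 (ℏ m t : ℝ) (hℏ : 0 < ℏ) (hm : 0 < m) (q p : ℝ) (σ σ' : ℂ)
    (hσ : 0 < σ.re) (hσ' : 0 < σ'.re) (hadm : ((starRingEnd ℂ) σ * σ').re = 1) :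
    ∀ x : ℝ,
      (((Real.sqrt (2 * Real.pi))⁻¹ : ℝ) : ℂ) *
          (∫ k : ℝ, Complex.exp (Complex.I * (k : ℂ) * (x : ℂ)) *
            (Complex.exp (-(Complex.I) * (ℏ : ℂ) * (t : ℂ) * (k : ℂ) ^ 2 / (2 * (m : ℂ))) *
              ft (fun y => coh ℏ σ σ' q p y) k)) =
        Complex.exp (Complex.I / (ℏ : ℂ) * ((p ^ 2 * t / (2 * m) : ℝ) : ℂ)) *
          coh ℏ (σ + Complex.I * σ' * (t : ℂ) / (2 * (m : ℂ))) σ' (q + p * t / m) p x :=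
  statement12_general ℏ m t hℏ hm.ne' q p σ σ' hσ' (hadm ▸ one_pos)
end

section
/- Let ℏ>0, m>0, σ₀>0, α∈ℝ\{0}, and β := 2α/ℏ. For every t∈ℝ, x∈ℝ, and ξ=(q,p)∈ℝ² with q·p≠0: e^{(i/ℏ)A_t}·(e^{itL_β}φ^ℏ_{σ_t,x})(ξ) = U₀(t)ψ^ℏ_{σ₀,ξ}(x) + θ(−qp)·θ(t + mq/p)·R₋(p/ℏ)·( U₀(t)ψ^ℏ_{σ₀,ξ}(x) + U₀(t)ψ^ℏ_{σ₀,ξ}(−x) ) + θ(qp)·θ(−t − mq/p)·R₊(p/ℏ)·( U₀(t)ψ^ℏ_{σ₀,ξ}(x) + U₀(t)ψ^ℏ_{σ₀,ξ}(−x) ), where U₀(t)ψ^ℏ_{σ₀,ξ}(x) := e^{(i/ℏ)A_t}·ψ^ℏ(σ_t, σ₀⁻¹, q+pt/m, p; x) denotes the free quantum evolution of the coherent state. -/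
open MeasureTheory Complex Filter

/-!
With `τ = -mq/p` the time at which the free trajectory through `(q, p)` meets the origin, the
Heaviside factors of the classical evolution say that `t` and `τ` have the same sign and
`|τ| < |t|`, that is `0 < τ < t` or `t < τ < 0`. The sign of `t` in the classical denominator then
selects `R₋` in the first case and `R₊` in the second. Since coherent states satisfy
`ψ(-q, -p; x) = ψ(q, p; -x)`, the even part in phase space becomes a reflection in `x`.
-/

theorem heav_of_nonpos {x : ℝ} (hx : x ≤ 0) : heav x = 0 := if_neg hx.not_gt

theorem heav_mul_of_pos_left {c : ℝ} (hc : 0 < c) (x : ℝ) : heav (c * x) = heav x := by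
  simp only [heav, mul_pos_iff_of_pos_left hc]

theorem heav_mul_mul_heav_abs_sub_abs_of_pos {t : ℝ} (ht : 0 < t) (τ : ℝ) :
    heav (t * τ) * heav (|t| - |τ|) = heav τ * heav (t - τ) := by
  rw [heav_mul_of_pos_left ht]
  rcases le_or_gt τ 0 with hτ | hτ
  · rw [heav_of_nonpos hτ, zero_mul, zero_mul]
  · rw [abs_of_pos ht, abs_of_pos hτ]

theorem heav_neg_mul_heav_sub_of_nonneg {t : ℝ} (ht : 0 ≤ t) (τ : ℝ) :
    heav (-τ) * heav (τ - t) = 0 := by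
  rcases le_or_gt 0 τ with hτ | hτ
  · rw [heav_of_nonpos (neg_nonpos.mpr hτ), zero_mul]
  · rw [heav_of_nonpos (by linarith : τ - t ≤ 0), mul_zero]

theorem heav_mul_mul_heav_abs_sub_abs_div_sign (t τ : ℝ) (z : ℂ) :
    ((heav (t * τ) * heav (|t| - |τ|) : ℝ) : ℂ) / (1 - (Real.sign t : ℂ) * z) =
      ((heav τ * heav (t - τ) : ℝ) : ℂ) / (1 - z) +
        ((heav (-τ) * heav (τ - t) : ℝ) : ℂ) / (1 + z) := by
  rcases lt_trichotomy t 0 with ht | rfl | ht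
  · have collision := heav_mul_mul_heav_abs_sub_abs_of_pos (neg_pos.mpr ht) (-τ)
    have no_forward := heav_neg_mul_heav_sub_of_nonneg (neg_nonneg.mpr ht.le) (-τ)
    simp only [neg_mul_neg, abs_neg, neg_neg, neg_sub_neg] at collision no_forward
    simp [Real.sign_of_neg ht, collision, no_forward]
  · have no_forward : heav τ * heav (0 - τ) = 0 := by
      simpa only [neg_neg, sub_zero, zero_sub] using heav_neg_mul_heav_sub_of_nonneg le_rfl (-τ)
    have no_backward := heav_neg_mul_heav_sub_of_nonneg le_rfl τ
    rw [no_forward, no_backward, zero_mul, heav_of_nonpos le_rfl]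
    simp
  · have collision := heav_mul_mul_heav_abs_sub_abs_of_pos ht τ
    have no_backward := heav_neg_mul_heav_sub_of_nonneg ht.le τ
    simp [Real.sign_of_pos ht, collision, no_backward]

/-- The time `τ` at which the free trajectory `t ↦ q + p t / m` meets the origin, where the
interaction sits; for `p = 0` it takes the junk value `0`. -/
noncomputable def crossingTime (m q p : ℝ) : ℝ := -(m * q / p)

section crossingTime

variable {m p : ℝ}

theorem eq_neg_div_mul_crossingTime (hm : m ≠ 0) (hp : p ≠ 0) (q : ℝ) :
    q = -(p / m * crossingTime m q p) := by
  unfold crossingTime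
  field_simp

theorem heav_mul_eq_heav_neg_crossingTime (hm : 0 < m) (hp : p ≠ 0) (q : ℝ) :
    heav (q * p) = heav (-crossingTime m q p) := by
  have hc : 0 < p ^ 2 / m := by positivity
  rw [← heav_mul_of_pos_left hc (-crossingTime m q p)]
  congr 1
  linear_combination p * eq_neg_div_mul_crossingTime hm.ne' hp q

theorem heav_neg_mul_eq_heav_crossingTime (hm : 0 < m) (hp : p ≠ 0) (q : ℝ) :
    heav (-(q * p)) = heav (crossingTime m q p) := by
  have hc : 0 < p ^ 2 / m := by positivity
  rw [← heav_mul_of_pos_left hc (crossingTime m q p)]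
  congr 1
  linear_combination -p * eq_neg_div_mul_crossingTime hm.ne' hp q

theorem heav_neg_mul_mul_eq_heav_mul_crossingTime (hm : 0 < m) (hp : p ≠ 0) (t q : ℝ) :
    heav (-(t * q * p)) = heav (t * crossingTime m q p) := by
  have hc : 0 < p ^ 2 / m := by positivity
  rw [← heav_mul_of_pos_left hc (t * crossingTime m q p)]
  congr 1
  linear_combination -t * p * eq_neg_div_mul_crossingTime hm.ne' hp q

theorem heav_abs_div_sub_abs_eq_heav_abs_sub_abs_crossingTime (hm : 0 < m) (hp : p ≠ 0)
    (t q : ℝ) :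
    heav (|p * t| / m - |q|) = heav (|t| - |crossingTime m q p|) := by
  have hc : 0 < |p| / m := by positivity
  have abs_q : |q| = |p| / m * |crossingTime m q p| := by
    rw [← abs_of_pos hm, ← abs_div, ← abs_mul, ← abs_neg (p / _ * _), abs_of_pos hm,
      ← eq_neg_div_mul_crossingTime hm.ne' hp]
  rw [← heav_mul_of_pos_left hc (|t| - _), abs_q, abs_mul]
  congr 1
  ring

end crossingTime

theorem Rpm_momentum_div_eq {ℏ : ℝ} (hℏ : 0 < ℏ) (m α s p : ℝ) :
    Rpm ℏ m α s (p / ℏ) =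
      -(1 + (s : ℂ) * (2 * I * ((|p| : ℝ) : ℂ) / ((m : ℂ) * ((2 * α / ℏ : ℝ) : ℂ))))⁻¹ := by
  rw [Rpm, abs_div, abs_of_pos hℏ]
  push_cast
  field_simp

theorem statement19_general {ℏ m α p : ℝ} (hℏ : 0 < ℏ) (hm : 0 < m) (hα : α ≠ 0) (hp : p ≠ 0)
    (f : ℝ → ℝ → ℂ) (t q : ℝ) :
    cEvol m (2 * α / ℏ) t f q p =
      f (q + p * t / m) p +
        ((heav (-(q * p)) : ℝ) : ℂ) * ((heav (t + m * q / p) : ℝ) : ℂ) * Rpm ℏ m α (-1) (p / ℏ) *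
          (f (q + p * t / m) p + f (-(q + p * t / m)) (-p)) +
        ((heav (q * p) : ℝ) : ℂ) * ((heav (-t - m * q / p) : ℝ) : ℂ) * Rpm ℏ m α 1 (p / ℏ) *
          (f (q + p * t / m) p + f (-(q + p * t / m)) (-p)) := by
  set z : ℂ := 2 * I * ((|p| : ℝ) : ℂ) / ((m : ℂ) * ((2 * α / ℏ : ℝ) : ℂ)) with hz
  have Rminus : Rpm ℏ m α (-1) (p / ℏ) = -(1 - z)⁻¹ := by
    simp [Rpm_momentum_div_eq hℏ, hz, sub_eq_add_neg]
  have Rplus : Rpm ℏ m α 1 (p / ℏ) = -(1 + z)⁻¹ := by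
    simp [Rpm_momentum_div_eq hℏ, hz]
  have forward : t + m * q / p = t - crossingTime m q p := (sub_neg_eq_add ..).symm
  have backward : -t - m * q / p = crossingTime m q p - t := by rw [crossingTime]; ring
  have classical_ratio : (Real.sign t : ℂ) * 2 * I * ((|p| : ℝ) : ℂ) /
      ((m : ℂ) * ((2 * α / ℏ : ℝ) : ℂ)) = Real.sign t * z := by rw [hz]; ring
  rw [cEvol, classical_ratio, Rminus, Rplus, forward, backward,
    heav_neg_mul_mul_eq_heav_mul_crossingTime hm hp,
    heav_abs_div_sub_abs_eq_heav_abs_sub_abs_crossingTime hm hp,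
    heav_neg_mul_eq_heav_crossingTime hm hp, heav_mul_eq_heav_neg_crossingTime hm hp,
    heav_mul_mul_heav_abs_sub_abs_div_sign]
  push_cast
  ring

theorem coh_neg_neg (ℏ : ℝ) (σ σ' : ℂ) (q p x : ℝ) :
    coh ℏ σ σ' (-q) (-p) x = coh ℏ σ σ' q p (-x) := by
  unfold coh
  congr 2
  push_cast
  ring

/-- Proposition 3.10 of the paper: explicit formula for the semiclassical
evolution `e^{(i/ℏ)A_t}(e^{itL_β}φ^ℏ_{σ_t,x})(ξ)` in terms of the free quantum evolution of the
coherent state and the reflection/transmission coefficients `R_±(p/ℏ)`. -/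
theorem statement19 (ℏ m σ₀ α : ℝ) (hℏ : 0 < ℏ) (hm : 0 < m) (hσ₀ : 0 < σ₀) (hα : α ≠ 0) :
    ∀ t x q p : ℝ, q * p ≠ 0 →
      Complex.exp (Complex.I / (ℏ : ℂ) * ((p ^ 2 * t / (2 * m) : ℝ) : ℂ)) *
        cEvol m (2 * α / ℏ) t
          (fun q' p' =>
            coh ℏ ((σ₀ : ℂ) + Complex.I * (t : ℂ) / ((2 * m * σ₀ : ℝ) : ℂ))
              ((σ₀ : ℂ))⁻¹ q' p' x) q p =
      (Complex.exp (Complex.I / (ℏ : ℂ) * ((p ^ 2 * t / (2 * m) : ℝ) : ℂ)) *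
          coh ℏ ((σ₀ : ℂ) + Complex.I * (t : ℂ) / ((2 * m * σ₀ : ℝ) : ℂ)) ((σ₀ : ℂ))⁻¹
            (q + p * t / m) p x) +
      ((heav (-(q * p)) : ℝ) : ℂ) * ((heav (t + m * q / p) : ℝ) : ℂ) * Rpm ℏ m α (-1) (p / ℏ) *
        (Complex.exp (Complex.I / (ℏ : ℂ) * ((p ^ 2 * t / (2 * m) : ℝ) : ℂ)) *
            coh ℏ ((σ₀ : ℂ) + Complex.I * (t : ℂ) / ((2 * m * σ₀ : ℝ) : ℂ)) ((σ₀ : ℂ))⁻¹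
              (q + p * t / m) p x +
          Complex.exp (Complex.I / (ℏ : ℂ) * ((p ^ 2 * t / (2 * m) : ℝ) : ℂ)) *
            coh ℏ ((σ₀ : ℂ) + Complex.I * (t : ℂ) / ((2 * m * σ₀ : ℝ) : ℂ)) ((σ₀ : ℂ))⁻¹
              (q + p * t / m) p (-x)) +
      ((heav (q * p) : ℝ) : ℂ) * ((heav (-t - m * q / p) : ℝ) : ℂ) * Rpm ℏ m α 1 (p / ℏ) *
        (Complex.exp (Complex.I / (ℏ : ℂ) * ((p ^ 2 * t / (2 * m) : ℝ) : ℂ)) *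
            coh ℏ ((σ₀ : ℂ) + Complex.I * (t : ℂ) / ((2 * m * σ₀ : ℝ) : ℂ)) ((σ₀ : ℂ))⁻¹
              (q + p * t / m) p x +
          Complex.exp (Complex.I / (ℏ : ℂ) * ((p ^ 2 * t / (2 * m) : ℝ) : ℂ)) *
            coh ℏ ((σ₀ : ℂ) + Complex.I * (t : ℂ) / ((2 * m * σ₀ : ℝ) : ℂ)) ((σ₀ : ℂ))⁻¹
              (q + p * t / m) p (-x)) := by
  intro t x q p hqp
  rw [statement19_general hℏ hm hα (right_ne_zero_of_mul hqp)]
  simp only [coh_neg_neg]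
  ring
end
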